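/- Let F be a field of characteristic different from 2 with a field ordering P, let Φ ∈ M_n(F) be symmetric and invertible, and suppose Φ is either positive definite or negative definite at P. Let σ be the involution on M_n(F) given by σ(X) = ΦXᵀΦ⁻¹, and let U ∈ M_n(F) be invertible with σ(U) = U. Then the form X ↦ tr(σ(X)UX) on M_n(F) is positive definite or negative definite at P if and only if the symmetric matrix Φ⁻¹U is positive definite or negative definite at P. -/

import Mathlib

open Matrix BigOperators

/-- A field ordering of `F`, given by its cone of nonnegative elements.
This is equivalent to a linear order making `F` a linearly ordered field. -/
structure FieldOrdering (F : Type*) [Field F] where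
  nonneg : F → Prop
  add_nonneg : ∀ {x y : F}, nonneg x → nonneg y → nonneg (x + y)
  mul_nonneg : ∀ {x y : F}, nonneg x → nonneg y → nonneg (x * y)
  total : ∀ x : F, nonneg x ∨ nonneg (-x)
  eq_zero_of : ∀ {x : F}, nonneg x → nonneg (-x) → x = 0

/-- `x >_P 0`. -/
def FieldOrdering.pos {F : Type*} [Field F] (P : FieldOrdering F) (x : F) : Prop :=
  P.nonneg x ∧ x ≠ 0

/-- A matrix is positive semidefinite at an ordering `P` if `xᵀMx ≥_P 0` for all `x`. -/
def Matrix.IsPSDAt {F : Type*} [Field F] {n : ℕ} (P : FieldOrdering F)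
    (M : Matrix (Fin n) (Fin n) F) : Prop :=
  ∀ x : Fin n → F, P.nonneg (x ⬝ᵥ (M *ᵥ x))

/-- A matrix is positive definite at an ordering `P` if `xᵀMx >_P 0` for all `x ≠ 0`. -/
def Matrix.IsPDAt {F : Type*} [Field F] {n : ℕ} (P : FieldOrdering F)
    (M : Matrix (Fin n) (Fin n) F) : Prop :=
  ∀ x : Fin n → F, x ≠ 0 → P.pos (x ⬝ᵥ (M *ᵥ x))

lemma FieldOrdering.pos_mul {F : Type*} [Field F] (P : FieldOrdering F) {a b : F}
    (ha : P.pos a) (hb : P.pos b) : P.pos (a * b) :=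
  ⟨P.mul_nonneg ha.1 hb.1, mul_ne_zero ha.2 hb.2⟩

lemma FieldOrdering.pos_of_mul {F : Type*} [Field F] (P : FieldOrdering F) {a b : F}
    (ha : P.pos a) (hab : P.pos (a * b)) : P.pos b := by
  have hb : b ≠ 0 := right_ne_zero_of_mul hab.2
  refine ⟨?_, hb⟩
  rcases P.total b with h | h
  · exact h
  · have h1 := P.mul_nonneg ha.1 h
    rw [mul_neg] at h1
    exact absurd (P.eq_zero_of hab.1 h1) hab.2

lemma FieldOrdering.nonneg_zero {F : Type*} [Field F] (P : FieldOrdering F) :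
    P.nonneg 0 := by
  rcases P.total 0 with h | h
  · exact h
  · simpa using h

lemma FieldOrdering.pos_add {F : Type*} [Field F] (P : FieldOrdering F) {a b : F}
    (ha : P.pos a) (hb : P.nonneg b) : P.pos (a + b) := by
  refine ⟨P.add_nonneg ha.1 hb, fun h => ha.2 ?_⟩
  have : b = -a := by linear_combination h
  exact P.eq_zero_of ha.1 (this ▸ hb)

lemma FieldOrdering.nonneg_sum {F : Type*} [Field F] (P : FieldOrdering F) {ι : Type*}
    (s : Finset ι) (f : ι → F) (h : ∀ i, P.nonneg (f i)) : P.nonneg (∑ i ∈ s, f i) := by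
  classical
  induction s using Finset.induction_on with
  | empty => simpa using P.nonneg_zero
  | insert a s ha ih => rw [Finset.sum_insert ha]; exact P.add_nonneg (h a) ih

lemma FieldOrdering.pos_sum {F : Type*} [Field F] (P : FieldOrdering F) {ι : Type*} [Fintype ι]
    (f : ι → F) (h : ∀ i, P.nonneg (f i)) (i : ι) (hi : P.pos (f i)) : P.pos (∑ i, f i) := by
  classical
  rw [← Finset.add_sum_erase _ _ (Finset.mem_univ i)]
  exact P.pos_add hi (P.nonneg_sum _ _ h)

lemma rank_one_trace {F : Type*} [Field F] {n : ℕ} (Φ M : Matrix (Fin n) (Fin n) F)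
    (x y : Fin n → F) :
    (Φ * (vecMulVec x y)ᵀ * M * vecMulVec x y).trace = (y ⬝ᵥ (Φ *ᵥ y)) * (x ⬝ᵥ (M *ᵥ x)) := by
  rw [transpose_vecMulVec, mul_vecMulVec, trace_vecMulVec, ← mulVec_mulVec, ← mulVec_mulVec,
    vecMulVec_mulVec, mulVec_smul, smul_dotProduct, dotProduct_comm (Φ *ᵥ y)]
  simp [mul_comm]

lemma pd_of_trace {F : Type*} [Field F] {n : ℕ} (P : FieldOrdering F)
    (Φ M : Matrix (Fin n) (Fin n) F) (hΦ : Φ.IsPDAt P)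
    (h : ∀ X : Matrix (Fin n) (Fin n) F, X ≠ 0 → P.pos (Φ * Xᵀ * M * X).trace) :
    M.IsPDAt P := by
  intro x hx
  have hX : vecMulVec x x ≠ 0 := by
    obtain ⟨i, hi⟩ := Function.ne_iff.mp hx
    intro h0
    have := congrFun (congrFun h0 i) i
    simp [vecMulVec_apply] at this
    exact hi this
  have := h _ hX
  rw [rank_one_trace] at this
  exact P.pos_of_mul (hΦ x hx) this

lemma exists_diag {F : Type*} [Field F] (hF : (2 : F) ≠ 0) {n : ℕ}
    (Φ : Matrix (Fin n) (Fin n) F) (hΦsym : Φᵀ = Φ) :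
    ∃ B : Matrix (Fin n) (Fin n) F, IsUnit B ∧ ∀ i j, i ≠ j → (Bᵀ * Φ * B) i j = 0 := by
  haveI : Invertible (2 : F) := invertibleOfNonzero hF
  have hs : LinearMap.IsSymm (Matrix.toBilin' Φ) := by
    refine ⟨fun x y => ?_⟩
    simp only [Matrix.toBilin'_apply', RingHom.id_apply]
    rw [dotProduct_mulVec, dotProduct_comm, ← mulVec_transpose, hΦsym]
  obtain ⟨v, hv⟩ := LinearMap.BilinForm.exists_orthogonal_basis hs
  have hn : Module.finrank F (Fin n → F) = n := by simp
  let w := v.reindex (finCongr hn)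
  refine ⟨((Pi.basisFun F (Fin n)).toMatrix w), ?_, ?_⟩
  · haveI := (Pi.basisFun F (Fin n)).invertibleToMatrix w
    exact isUnit_of_invertible _
  · intro i j hij
    have h1 : Matrix.toBilin' Φ (w i) (w j) = 0 := by
      simp only [w, Module.Basis.reindex_apply]
      apply hv
      simpa using hij
    rw [Matrix.toBilin'_apply'] at h1
    rw [Matrix.mul_assoc, Matrix.mul_apply, ← h1]
    simp [dotProduct, Matrix.mul_apply, mulVec, Module.Basis.toMatrix_apply]

lemma trace_pos {F : Type*} [Field F] (hF : (2 : F) ≠ 0) {n : ℕ} (P : FieldOrdering F)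
    (Φ M : Matrix (Fin n) (Fin n) F) (hΦsym : Φᵀ = Φ) (hΦ : Φ.IsPDAt P) (hM : M.IsPDAt P)
    (X : Matrix (Fin n) (Fin n) F) (hX : X ≠ 0) : P.pos (Φ * Xᵀ * M * X).trace := by
  obtain ⟨B, hB, hD⟩ := exists_diag hF Φ hΦsym
  have hdet : IsUnit B.det := (Matrix.isUnit_iff_isUnit_det B).mp hB
  obtain ⟨Y, rfl⟩ : ∃ Y, X = Y * Bᵀ :=
    ⟨X * (Bᵀ)⁻¹, by
      rw [Matrix.mul_assoc, Matrix.nonsing_inv_mul _ (by simpa using hdet), Matrix.mul_one]⟩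
  have hY : Y ≠ 0 := by rintro rfl; simp at hX
  have key : (Φ * (Y * Bᵀ)ᵀ * M * (Y * Bᵀ)).trace
      = ∑ i, (B.col i ⬝ᵥ (Φ *ᵥ B.col i)) * (Y.col i ⬝ᵥ (M *ᵥ Y.col i)) := by
    have e1 : (Φ * (Y * Bᵀ)ᵀ * M * (Y * Bᵀ)).trace = ((Bᵀ * Φ * B) * (Yᵀ * M * Y)).trace := by
      rw [← Matrix.mul_assoc, Matrix.trace_mul_comm]
      simp [Matrix.transpose_mul, Matrix.mul_assoc]
    have e2 : ∀ (A N : Matrix (Fin n) (Fin n) F) i,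
        (Aᵀ * N * A) i i = A.col i ⬝ᵥ (N *ᵥ A.col i) := by
      intro A N i
      rw [Matrix.mul_assoc, Matrix.mul_apply]
      simp [dotProduct, Matrix.mul_apply, mulVec]
    rw [e1, Matrix.trace]
    refine Finset.sum_congr rfl fun i _ => ?_
    rw [Matrix.diag_apply, Matrix.mul_apply, Finset.sum_eq_single i]
    · rw [e2, e2]
    · intro j _ hj
      rw [hD i j (Ne.symm hj), zero_mul]
    · simp
  have hBc : ∀ i, B.col i ≠ 0 := by
    intro i h0
    apply hdet.ne_zero
    exact Matrix.det_eq_zero_of_column_eq_zero i (fun j => congrFun h0 j)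
  rw [key]
  have hnn : ∀ y, P.nonneg (y ⬝ᵥ (M *ᵥ y)) := by
    intro y
    by_cases hy : y = 0
    · subst hy; simpa using P.nonneg_zero
    · exact (hM y hy).1
  obtain ⟨i, hi⟩ : ∃ i, Y.col i ≠ 0 := by
    by_contra hc
    push Not at hc
    exact hY (by ext a b; exact congrFun (hc b) a)
  exact P.pos_sum _ (fun i => P.mul_nonneg (hΦ _ (hBc i)).1 (hnn _)) i
    (P.pos_mul (hΦ _ (hBc i)) (hM _ hi))

/-- For `σ = ad_Φ` with `Φ` positive or negative definite at `P` and `U` invertible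
σ-symmetric, the trace form `X ↦ tr(σ(X)UX)` is positive or negative definite at `P`
iff the symmetric matrix `Φ⁻¹U` is positive or negative definite at `P`. -/
theorem stmt_8 {F : Type*} [Field F] (hF : (2 : F) ≠ 0) {n : ℕ}
    (P : FieldOrdering F)
    (Φ : Matrix (Fin n) (Fin n) F) (hΦsym : Φᵀ = Φ) (hΦ : IsUnit Φ.det)
    (hΦdef : Φ.IsPDAt P ∨ (-Φ).IsPDAt P)
    (U : Matrix (Fin n) (Fin n) F) (hUunit : IsUnit U) (hUσ : Φ * Uᵀ * Φ⁻¹ = U) :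
    ((∀ X : Matrix (Fin n) (Fin n) F, X ≠ 0 →
        P.pos ((Φ * Xᵀ * Φ⁻¹) * U * X).trace) ∨
     (∀ X : Matrix (Fin n) (Fin n) F, X ≠ 0 →
        P.pos (-((Φ * Xᵀ * Φ⁻¹) * U * X).trace))) ↔
      ((Φ⁻¹ * U).IsPDAt P ∨ (-(Φ⁻¹ * U)).IsPDAt P) := by
  have hr : ∀ X : Matrix (Fin n) (Fin n) F,
      Φ * Xᵀ * Φ⁻¹ * U * X = Φ * Xᵀ * (Φ⁻¹ * U) * X := by
    intro X; simp only [Matrix.mul_assoc]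
  simp only [hr]
  generalize Φ⁻¹ * U = M
  have hsn : (-Φ)ᵀ = -Φ := by rw [transpose_neg, hΦsym]
  constructor
  · rintro (h | h) <;> rcases hΦdef with hd | hd
    · exact Or.inl (pd_of_trace P Φ M hd h)
    · exact Or.inr (pd_of_trace P (-Φ) (-M) hd (by simpa using h))
    · exact Or.inr (pd_of_trace P Φ (-M) hd (by simpa using h))
    · exact Or.inl (pd_of_trace P (-Φ) M hd (by simpa using h))
  · rintro (h | h) <;> rcases hΦdef with hd | hd
    · exact Or.inl (trace_pos hF P Φ M hΦsym hd h)
    · exact Or.inr (by simpa using trace_pos hF P (-Φ) M hsn hd h)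
    · exact Or.inr (by simpa using trace_pos hF P Φ (-M) hΦsym hd h)
    · exact Or.inl (by simpa using trace_pos hF P (-Φ) (-M) hsn hd h)
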